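/- (S-resolvent equation with boundary conditions.) Let s, q ∈ ρ_{S,B}(T) and suppose the quaternion σ := q² − 2(Re s)·q + |s|² is nonzero (equivalently, s does not lie on the sphere [q] of quaternions with the same real part and the same modulus as q). Then for every v ∈ V, setting w := σ^{-1}·v, u := [T,Q_{s,B}[T]^{-1}](S_{L,B}^{-1}(q,T)w) and u' := [T,Q_{s,B}[T]^{-1}](S_{L,B}^{-1}(q,T)(q·w)), one has: S_{R,B}^{-1}(s,T)(S_{L,B}^{-1}(q,T)v) = (S_{R,B}^{-1}(s,T) − S_{L,B}^{-1}(q,T))(q·w) − s̄·((S_{R,B}^{-1}(s,T) − S_{L,B}^{-1}(q,T))w) + s̄·(s̄·u − Tu) − (s̄·u' − Tu'). -/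

import Mathlib

/-- A two-sided Banach module structure over the quaternions `ℍ = Quaternion ℝ` on a real
Banach space `V`: commuting left (`lm`) and right (`rm`) `ℍ`-module structures, compatible
with the real vector space structure, with a norm bound `‖a·v‖, ‖v·a‖ ≤ C|a|‖v‖`. -/
structure QuatBimodule (V : Type*) [NormedAddCommGroup V] [NormedSpace ℝ V] where
  /-- left multiplication `v ↦ a·v` (real-linear in `v`) -/
  lm : Quaternion ℝ → V →ₗ[ℝ] V
  /-- right multiplication `v ↦ v·a` (real-linear in `v`) -/
  rm : Quaternion ℝ → V →ₗ[ℝ] V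
  lm_add : ∀ (a b : Quaternion ℝ) (v : V), lm (a + b) v = lm a v + lm b v
  rm_add : ∀ (a b : Quaternion ℝ) (v : V), rm (a + b) v = rm a v + rm b v
  lm_mul : ∀ (a b : Quaternion ℝ) (v : V), lm (a * b) v = lm a (lm b v)
  rm_mul : ∀ (a b : Quaternion ℝ) (v : V), rm (a * b) v = rm b (rm a v)
  lm_rm_comm : ∀ (a b : Quaternion ℝ) (v : V), lm a (rm b v) = rm b (lm a v)
  lm_real : ∀ (r : ℝ) (v : V), lm (r : Quaternion ℝ) v = r • v
  rm_real : ∀ (r : ℝ) (v : V), rm (r : Quaternion ℝ) v = r • v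
  bound : ∃ C : ℝ, ∀ (a : Quaternion ℝ) (v : V),
    ‖lm a v‖ ≤ C * ‖a‖ * ‖v‖ ∧ ‖rm a v‖ ≤ C * ‖a‖ * ‖v‖

/-- `dom (T²)`. -/
def dom2 {V : Type*} (T : V → V) (D : Set V) : Set V := {u | u ∈ D ∧ T u ∈ D}

/-- `dom_B (T²) = dom(T²) ∩ B`. -/
def domB2 {V : Type*} (T : V → V) (D Bc : Set V) : Set V := dom2 T D ∩ Bc

/-- The operator `Q_{s,B}[T] u = T²u − 2(Re s) Tu + |s|² u`. -/
noncomputable def Qq {V : Type*} [NormedAddCommGroup V] [NormedSpace ℝ V]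
    (T : V → V) (s : Quaternion ℝ) (u : V) : V :=
  T (T u) - (2 * s.re) • T u + (‖s‖ ^ 2) • u

/-- `R` is a bounded two-sided inverse of `Q_{s,B}[T] : dom_B(T²) → V`. -/
def IsInvQ {V : Type*} [NormedAddCommGroup V] [NormedSpace ℝ V]
    (T : V → V) (D Bc : Set V) (s : Quaternion ℝ) (R : V →L[ℝ] V) : Prop :=
  (∀ v : V, R v ∈ domB2 T D Bc) ∧ (∀ v : V, Qq T s (R v) = v) ∧
    (∀ u ∈ domB2 T D Bc, R (Qq T s u) = u)

/-- The `S`-resolvent set with boundary conditions `ρ_{S,B}(T) ⊆ ℍ`. -/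
def rhoSB {V : Type*} [NormedAddCommGroup V] [NormedSpace ℝ V]
    (T : V → V) (D Bc : Set V) : Set (Quaternion ℝ) :=
  {s | ∃ R : V →L[ℝ] V, IsInvQ T D Bc s R}

/-
Only values of `T` on its domain enter, so `T` may be replaced by a real-linear extension to all of
`V`, and the equation becomes an identity in the ring of real-linear endomorphisms of `V`.
There `T L = L q - 1` for the left resolvent `L` at `q`, whereas for the right resolvent `S` at `s`
the mirror identity `S T = s S - 1` fails by the commutator term `(s̄ - T) [T, Q_s⁻¹]`. Evaluating
`S T L` in both ways gives, with `C = (s̄ - T) [T, Q_s⁻¹] L`,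
`S - L = S L q - s S L + C`,
and applying `Y ↦ Y q - s̄ Y` to both sides turns `S L q - s S L` into
`S L (q² - 2 Re(s) q + |s|²)`, because `s + s̄ = 2 Re s` and `s̄ s = |s|²` are real and hence
commute with `S L`.
-/

section Algebra

variable {A : Type*} [Ring A] [Algebra ℝ A]

/-- The element `Q_s[T] = T² - 2 Re(s) T + |s|²` of a real algebra, whose right inverses `R` enter
the `S`-resolvents. -/
noncomputable def quadraticPencil (T : A) (s : Quaternion ℝ) : A :=
  T * T - (2 * s.re) • T + (‖s‖ ^ 2) • 1

/-- The left `S`-resolvent `R s̄ - T R`, where `R` plays the role of `Q_s[T]⁻¹` and quaternions act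
through `φ`. -/
noncomputable def leftSResolvent (φ : Quaternion ℝ →ₐ[ℝ] A) (T R : A) (s : Quaternion ℝ) : A :=
  R * φ (star s) - T * R

/-- The right `S`-resolvent `s̄ R - T R`, where `R` plays the role of `Q_s[T]⁻¹` and quaternions act
through `φ`. -/
noncomputable def rightSResolvent (φ : Quaternion ℝ →ₐ[ℝ] A) (T R : A) (s : Quaternion ℝ) : A :=
  φ (star s) * R - T * R

variable (φ : Quaternion ℝ →ₐ[ℝ] A) {T R : A} {s : Quaternion ℝ}

lemma map_coe_real (r : ℝ) : φ (r : Quaternion ℝ) = r • (1 : A) := by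
  rw [← Algebra.algebraMap_eq_smul_one]
  exact φ.commutes r

lemma map_add_map_star (s : Quaternion ℝ) : φ s + φ (star s) = (2 * s.re) • (1 : A) := by
  rw [← map_add, Quaternion.self_add_star', map_coe_real]

lemma map_star_mul_map (s : Quaternion ℝ) : φ (star s) * φ s = (‖s‖ ^ 2) • (1 : A) := by
  rw [← map_mul, Quaternion.star_mul_self, Quaternion.normSq_eq_norm_mul_self, ← sq, map_coe_real]

lemma map_mul_map_star (s : Quaternion ℝ) : φ s * φ (star s) = (‖s‖ ^ 2) • (1 : A) := by
  simpa only [star_star, norm_star] using map_star_mul_map φ (star s)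

lemma mul_mul_eq_of_quadraticPencil_mul_eq_one (hR : quadraticPencil T s * R = 1) :
    T * T * R = 1 + (2 * s.re) • (T * R) - (‖s‖ ^ 2) • R := by
  rw [quadraticPencil, add_mul, sub_mul, smul_mul_assoc, smul_mul_assoc, one_mul] at hR
  rw [← hR]
  abel

lemma mul_leftSResolvent (hR : quadraticPencil T s * R = 1) :
    T * leftSResolvent φ T R s = leftSResolvent φ T R s * φ s - 1 := by
  have h_trace : (2 * s.re) • (T * R) = T * R * φ s + T * R * φ (star s) := by
    rw [← mul_add, map_add_map_star, mul_smul_comm, mul_one]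
  have h_norm : (‖s‖ ^ 2) • R = R * φ (star s) * φ s := by
    rw [mul_assoc, map_star_mul_map, mul_smul_comm, mul_one]
  rw [leftSResolvent, mul_sub, ← mul_assoc, ← mul_assoc,
    mul_mul_eq_of_quadraticPencil_mul_eq_one hR, h_trace, h_norm, sub_mul]
  abel

lemma map_star_sub_mul_lie (hR : quadraticPencil T s * R = 1) :
    (φ (star s) - T) * ⁅T, R⁆ =
      φ s * rightSResolvent φ T R s - rightSResolvent φ T R s * T - 1 := by
  have h_trace : (2 * s.re) • (T * R) = φ s * (T * R) + φ (star s) * (T * R) := by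
    rw [← add_mul, map_add_map_star, smul_mul_assoc, one_mul]
  have h_norm : (‖s‖ ^ 2) • R = φ s * (φ (star s) * R) := by
    rw [← mul_assoc, map_mul_map_star, smul_mul_assoc, one_mul]
  rw [Ring.lie_def, rightSResolvent, sub_mul, mul_sub, mul_sub T, ← mul_assoc T T,
    mul_mul_eq_of_quadraticPencil_mul_eq_one hR, h_trace, h_norm, mul_sub, sub_mul]
  noncomm_ring

variable {Rs Rq : A} {q : Quaternion ℝ}

lemma rightSResolvent_sub_leftSResolvent (hRs : quadraticPencil T s * Rs = 1)
    (hRq : quadraticPencil T q * Rq = 1) :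
    rightSResolvent φ T Rs s - leftSResolvent φ T Rq q =
      rightSResolvent φ T Rs s * leftSResolvent φ T Rq q * φ q
        - φ s * (rightSResolvent φ T Rs s * leftSResolvent φ T Rq q)
        + (φ (star s) - T) * ⁅T, Rs⁆ * leftSResolvent φ T Rq q := by
  rw [map_star_sub_mul_lie φ hRs, sub_mul, sub_mul, mul_assoc _ T, mul_leftSResolvent φ hRq]
  noncomm_ring

theorem rightSResolvent_mul_leftSResolvent (hRs : quadraticPencil T s * Rs = 1)
    (hRq : quadraticPencil T q * Rq = 1) :
    rightSResolvent φ T Rs s * leftSResolvent φ T Rq q *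
        φ (q * q - ((2 * s.re : ℝ) : Quaternion ℝ) * q + ((‖s‖ ^ 2 : ℝ) : Quaternion ℝ)) =
      (rightSResolvent φ T Rs s - leftSResolvent φ T Rq q) * φ q
        - φ (star s) * (rightSResolvent φ T Rs s - leftSResolvent φ T Rq q)
        + φ (star s) * ((φ (star s) - T) * ⁅T, Rs⁆ * leftSResolvent φ T Rq q)
        - (φ (star s) - T) * ⁅T, Rs⁆ * leftSResolvent φ T Rq q * φ q := by
  rw [rightSResolvent_sub_leftSResolvent φ hRs hRq]
  set X := rightSResolvent φ T Rs s * leftSResolvent φ T Rq q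
  have h_trace : (2 * s.re) • (X * φ q) = φ s * X * φ q + φ (star s) * X * φ q := by
    rw [← add_mul, ← add_mul, map_add_map_star, smul_mul_assoc, smul_mul_assoc, one_mul]
  have h_norm : (‖s‖ ^ 2) • X = φ (star s) * (φ s * X) := by
    rw [← mul_assoc, map_star_mul_map, smul_mul_assoc, one_mul]
  rw [map_add, map_sub, map_mul, Quaternion.coe_mul_eq_smul, map_smul, map_coe_real,
    mul_add, mul_sub, mul_smul_comm, mul_smul_comm, mul_one, h_trace, h_norm]
  noncomm_ring

end Algebra

lemma exists_linearMap_eqOn_submodule {K V W : Type*} [DivisionRing K] [AddCommGroup V] [Module K V]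
    [AddCommGroup W] [Module K W] {f : V → W} {D : Submodule K V}
    (hadd : ∀ u ∈ D, ∀ v ∈ D, f (u + v) = f u + f v)
    (hsmul : ∀ (c : K), ∀ u ∈ D, f (c • u) = c • f u) :
    ∃ g : V →ₗ[K] W, Set.EqOn g f D := by
  let f₀ : D →ₗ[K] W :=
    { toFun := fun u => f u
      map_add' := fun u v => hadd u u.2 v v.2
      map_smul' := fun c u => hsmul c u u.2 }
  obtain ⟨g, hg⟩ := f₀.exists_extend
  exact ⟨g, fun u hu => LinearMap.congr_fun hg ⟨u, hu⟩⟩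

/-- `R` is a linear right inverse of `Q_s[T] = T² - 2 Re(s) T + |s|²` with range in `dom(T²)`: the
purely algebraic part of `IsInvQ`, which makes sense without a norm on `V`. -/
structure IsRightInvQ {V : Type*} [AddCommGroup V] [Module ℝ V] (T : V → V) (D : Set V)
    (s : Quaternion ℝ) (R : V →ₗ[ℝ] V) : Prop where
  apply_mem_dom2 : ∀ z, R z ∈ dom2 T D
  pencil_apply : ∀ z, T (T (R z)) - (2 * s.re) • T (R z) + (‖s‖ ^ 2) • R z = z

lemma IsRightInvQ.quadraticPencil_mul {V : Type*} [AddCommGroup V] [Module ℝ V] {T : V → V}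
    {D : Set V} {s : Quaternion ℝ} {R : V →ₗ[ℝ] V} (hR : IsRightInvQ T D s R)
    {T' : Module.End ℝ V} (hT' : Set.EqOn T' T D) : quadraticPencil T' s * R = 1 := by
  ext z
  have h_mem := hR.apply_mem_dom2 z
  calc (quadraticPencil T' s * R) z
      = T' (T' (R z)) - (2 * s.re) • T' (R z) + (‖s‖ ^ 2) • R z := rfl
    _ = z := by rw [hT' h_mem.1, hT' h_mem.2, hR.pencil_apply]

lemma IsInvQ.isRightInvQ {V : Type*} [NormedAddCommGroup V] [NormedSpace ℝ V] {T : V → V}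
    {D Bc : Set V} {s : Quaternion ℝ} {R : V →L[ℝ] V} (hR : IsInvQ T D Bc s R) :
    IsRightInvQ T D s R.toLinearMap :=
  ⟨fun z => (hR.1 z).1, hR.2.1⟩

namespace QuatBimodule

variable {V : Type*} [NormedAddCommGroup V] [NormedSpace ℝ V] (P : QuatBimodule V)

lemma lm_one (v : V) : P.lm 1 v = v := by
  simpa only [Quaternion.coe_one, one_smul] using P.lm_real 1 v

/-- The left multiplication of a two-sided module, as a `Module` over the quaternions. It is not a
global instance since it depends on `P`. -/
abbrev leftModule : Module (Quaternion ℝ) V where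
  smul a v := P.lm a v
  one_smul := P.lm_one
  mul_smul := P.lm_mul
  smul_zero a := map_zero (P.lm a)
  smul_add a := map_add (P.lm a)
  add_smul := P.lm_add
  zero_smul v := (P.lm_real 0 v).trans (zero_smul ℝ v)

lemma isScalarTower_leftModule :
    letI := P.leftModule
    IsScalarTower ℝ (Quaternion ℝ) V :=
  letI := P.leftModule
  ⟨fun r a v => by
    rw [← Quaternion.coe_mul_eq_smul, mul_smul]
    exact P.lm_real r (P.lm a v)⟩

lemma eq_lm_of_eq_lm_inv {σ : Quaternion ℝ} (hσ : σ ≠ 0) {v w : V} (hw : w = P.lm σ⁻¹ v) :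
    v = P.lm σ w := by
  rw [hw, ← P.lm_mul, mul_inv_cancel₀ hσ, P.lm_one]

end QuatBimodule

theorem stmt19_general {V : Type*} [AddCommGroup V] [Module ℝ V] [Module (Quaternion ℝ) V]
    [IsScalarTower ℝ (Quaternion ℝ) V] (T : V → V) (D : Submodule ℝ V)
    (hTadd : ∀ u ∈ D, ∀ v ∈ D, T (u + v) = T u + T v)
    (hTsmul : ∀ (c : ℝ), ∀ u ∈ D, T (c • u) = c • T u)
    (s q : Quaternion ℝ) (Rs Rq : V →ₗ[ℝ] V)
    (hRs : IsRightInvQ T (D : Set V) s Rs) (hRq : IsRightInvQ T (D : Set V) q Rq)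
    (SLq SRs : V → V)
    (hSLq : ∀ z : V, SLq z = Rq (star q • z) - T (Rq z))
    (hSRs : ∀ z : V, SRs z = star s • Rs z - T (Rs z))
    (v w u u' : V)
    (hv : v = (q * q - ((2 * s.re : ℝ) : Quaternion ℝ) * q + ((‖s‖ ^ 2 : ℝ) : Quaternion ℝ)) • w)
    (hu : u = T (Rs (SLq w)) - Rs (T (SLq w)))
    (hu' : u' = T (Rs (SLq (q • w))) - Rs (T (SLq (q • w)))) :
    SRs (SLq v) = (SRs (q • w) - SLq (q • w)) - star s • (SRs w - SLq w)
      + star s • (star s • u - T u) - (star s • u' - T u') := by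
  obtain ⟨T', hT'⟩ := exists_linearMap_eqOn_submodule hTadd hTsmul
  let φ : Quaternion ℝ →ₐ[ℝ] Module.End ℝ V := Algebra.lsmul ℝ ℝ V
  have h_left (z : V) : SLq z = leftSResolvent φ T' Rq q z := by
    rw [hSLq, ← hT' (hRq.apply_mem_dom2 z).1]; rfl
  have h_right (z : V) : SRs z = rightSResolvent φ T' Rs s z := by
    rw [hSRs, ← hT' (hRs.apply_mem_dom2 z).1]; rfl
  have h_left_mem (z : V) : SLq z ∈ D :=
    hSLq z ▸ D.sub_mem (hRq.apply_mem_dom2 _).1 (hRq.apply_mem_dom2 z).2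
  have h_comm_mem (a b : V) : T (Rs a) - Rs b ∈ D :=
    D.sub_mem (hRs.apply_mem_dom2 a).2 (hRs.apply_mem_dom2 b).1
  have h_comm (z : V) : T (Rs (SLq z)) - Rs (T (SLq z)) =
      ⁅T', Rs⁆ (leftSResolvent φ T' Rq q z) := by
    rw [← hT' (hRs.apply_mem_dom2 _).1, ← hT' (h_left_mem z), h_left]; rfl
  have h_op := rightSResolvent_mul_leftSResolvent φ (hRs.quadraticPencil_mul hT')
    (hRq.quadraticPencil_mul hT')
  rw [← hT' (hu ▸ h_comm_mem _ _), ← hT' (hu' ▸ h_comm_mem _ _), hu, hu', h_comm, h_comm, hv]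
  simp only [h_left, h_right]
  exact LinearMap.congr_fun h_op w

/-- `S`-resolvent equation with boundary conditions: for `s, q ∈ ρ_{S,B}(T)`
with inverses `Rs = Q_{s,B}[T]⁻¹`, `Rq = Q_{q,B}[T]⁻¹`, with `σ = q² − 2(Re s)q + |s|² ≠ 0`,
`w = σ⁻¹·v`, `u = [T,Q_{s,B}[T]⁻¹](S_{L,B}^{-1}(q,T)w)` and
`u' = [T,Q_{s,B}[T]⁻¹](S_{L,B}^{-1}(q,T)(q·w))`, one has
`S_{R,B}^{-1}(s,T)(S_{L,B}^{-1}(q,T)v) = (S_R(s) − S_L(q))(q·w) − s̄·((S_R(s) − S_L(q))w)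
 + s̄·(s̄·u − Tu) − (s̄·u' − Tu')`. -/
theorem stmt19 {V : Type*} [NormedAddCommGroup V] [NormedSpace ℝ V] [CompleteSpace V]
    (P : QuatBimodule V) (T : V → V) (D Bc : Submodule ℝ V)
    (hBD : (Bc : Set V) ⊆ (D : Set V))
    (hDrm : ∀ (a : Quaternion ℝ), ∀ v ∈ D, P.rm a v ∈ D)
    (hBrm : ∀ (a : Quaternion ℝ), ∀ v ∈ Bc, P.rm a v ∈ Bc)
    (hTadd : ∀ u ∈ D, ∀ v ∈ D, T (u + v) = T u + T v)
    (hTsmul : ∀ (c : ℝ), ∀ u ∈ D, T (c • u) = c • T u)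
    (hTrm : ∀ (a : Quaternion ℝ), ∀ u ∈ D, T (P.rm a u) = P.rm a (T u))
    (hTclosed : IsClosed {p : V × V | p.1 ∈ D ∧ p.2 = T p.1})
    (s q : Quaternion ℝ) (Rs Rq : V →L[ℝ] V)
    (hRs : IsInvQ T (D : Set V) (Bc : Set V) s Rs)
    (hRq : IsInvQ T (D : Set V) (Bc : Set V) q Rq)
    -- the left `S`-resolvent operator at `q` and the right one at `s`
    (SLq SRs : V → V)
    (hSLq : ∀ z : V, SLq z = Rq (P.lm (star q) z) - T (Rq z))
    (hSRs : ∀ z : V, SRs z = P.lm (star s) (Rs z) - T (Rs z))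
    -- the commutator `[T, Q_{s,B}[T]⁻¹]`
    (comm : V → V) (hcomm : ∀ z : V, comm z = T (Rs z) - Rs (T z))
    (σ : Quaternion ℝ)
    (hσdef : σ = q * q - ((2 * s.re : ℝ) : Quaternion ℝ) * q + ((‖s‖ ^ 2 : ℝ) : Quaternion ℝ))
    (hσ : σ ≠ 0)
    (v w u u' : V)
    (hw : w = P.lm σ⁻¹ v)
    (hu : u = comm (SLq w))
    (hu' : u' = comm (SLq (P.lm q w))) :
    SRs (SLq v)
      = (SRs (P.lm q w) - SLq (P.lm q w)) - P.lm (star s) (SRs w - SLq w)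
        + P.lm (star s) (P.lm (star s) u - T u) - (P.lm (star s) u' - T u') := by
  let := P.leftModule
  have := P.isScalarTower_leftModule
  exact stmt19_general T D hTadd hTsmul s q Rs Rq hRs.isRightInvQ hRq.isRightInvQ SLq SRs hSLq hSRs
    v w u u' (hσdef ▸ P.eq_lm_of_eq_lm_inv hσ hw) (hu.trans (hcomm _)) (hu'.trans (hcomm _))
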